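/- arXiv:2502.03585 — 2 statements merged into one kernel-verified Lean document; each statement's English description precedes it below -/
import Mathlib

section
/- Let G be a finite group and F a finite field whose characteristic does not divide the order of G. Then the groupoid of finite-dimensional representations of G over F and their isomorphisms is tame: the family indexed by isomorphism classes of finite-dimensional F-linear representations of G, assigning to each class [V] the real number 1/#Aut(V), is summable. Formally: Summable (fun X : Skeleton (FDRep F G) => ((Nat.card (Aut X)) : ℝ)⁻¹). -/
open CategoryTheory

/-- Summability of a product of reciprocal factorials over a finite index set. -/
theorem tame_summable_aux (ι : Type) [Fintype ι] :
    Summable (fun n : ι → ℕ => ∏ i, (((n i).factorial : ℝ))⁻¹) := by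
  classical
  refine summable_of_sum_le (c := ∏ _i : ι, Real.exp 1)
    (fun n => Finset.prod_nonneg fun i _ => by positivity) ?_
  intro s
  obtain ⟨N, hN⟩ : ∃ N : ℕ, ∀ n ∈ s, ∀ i, n i < N := by
    refine ⟨(s.sup fun n => Finset.univ.sup n) + 1, fun n hn i => ?_⟩
    have h1 : n i ≤ Finset.univ.sup n := Finset.le_sup (Finset.mem_univ i)
    have h2 : Finset.univ.sup n ≤ s.sup fun n => Finset.univ.sup n :=
      Finset.le_sup (f := fun n : ι → ℕ => Finset.univ.sup n) hn
    omega
  calc ∑ n ∈ s, ∏ i, (((n i).factorial : ℝ))⁻¹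
      ≤ ∑ n ∈ Fintype.piFinset (fun _ : ι => Finset.range N), ∏ i, (((n i).factorial : ℝ))⁻¹ := by
        apply Finset.sum_le_sum_of_subset_of_nonneg
        · intro n hn
          simpa using hN n hn
        · intro n _ _
          exact Finset.prod_nonneg fun i _ => by positivity
    _ = ∏ _i : ι, ∑ k ∈ Finset.range N, ((k.factorial : ℝ))⁻¹ := by
        rw [Finset.prod_univ_sum]
    _ ≤ ∏ _i : ι, Real.exp 1 := by
        apply Finset.prod_le_prod
        · intro i _
          exact Finset.sum_nonneg fun k _ => by positivity
        · intro i _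
          have := Real.sum_le_exp_of_nonneg (x := 1) zero_le_one N
          simpa using this

/-- A semisimple finite module is a product of powers of quotients by maximal left ideals. -/
theorem tame_decomp (A : Type) [Ring A] (M : Type) [AddCommGroup M] [Module A M]
    [IsSemisimpleModule A M] [Module.Finite A M] :
    ∃ n : {I : Ideal A // I.IsMaximal} → ℕ,
      Nonempty (M ≃ₗ[A] ((i : {I : Ideal A // I.IsMaximal}) → Fin (n i) → (A ⧸ i.1))) := by
  classical
  obtain ⟨m, S, e, hs⟩ := IsSemisimpleModule.exists_linearEquiv_fin_dfinsupp A M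
  have h : ∀ j, ∃ I : {I : Ideal A // I.IsMaximal}, Nonempty (S j ≃ₗ[A] A ⧸ I.1) := by
    intro j
    obtain ⟨I, hI, ⟨e⟩⟩ := isSimpleModule_iff_quot_maximal.mp (hs j)
    exact ⟨⟨I, hI⟩, ⟨e⟩⟩
  choose f hf using h
  let g := fun j => (hf j).some
  let φ : ((i : {I : Ideal A // I.IsMaximal}) → {j // f j = i} → (A ⧸ i.1)) →ₗ[A]
      ((j : Fin m) → (A ⧸ (f j).1)) :=
    { toFun := fun w j => w (f j) ⟨j, rfl⟩
      map_add' := fun _ _ => rfl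
      map_smul' := fun _ _ => rfl }
  have hφ : Function.Bijective φ := by
    constructor
    · intro w w' hw
      funext i j
      obtain ⟨j, rfl⟩ := j
      exact congrFun hw j
    · intro v
      exact ⟨fun i j => j.2 ▸ v j.1, rfl⟩
  refine ⟨fun i => Fintype.card {j // f j = i}, ⟨?_⟩⟩
  exact e ≪≫ₗ DFinsupp.linearEquivFunOnFintype ≪≫ₗ LinearEquiv.piCongrRight g ≪≫ₗ
    (LinearEquiv.ofBijective φ hφ).symm ≪≫ₗ
    LinearEquiv.piCongrRight fun i =>
      LinearEquiv.funCongrLeft A (A ⧸ i.1) (Fintype.equivFin {j // f j = i}).symm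

/-- Permuting the factors gives an injection into the automorphisms. -/
theorem tame_perm_inj (A : Type) [Ring A] (n : {I : Ideal A // I.IsMaximal} → ℕ) :
    Function.Injective (fun σ : ((i : {I : Ideal A // I.IsMaximal}) → Equiv.Perm (Fin (n i))) =>
      (LinearEquiv.piCongrRight fun i => LinearEquiv.funCongrLeft A (A ⧸ i.1) (σ i) :
        ((i : {I : Ideal A // I.IsMaximal}) → Fin (n i) → (A ⧸ i.1)) ≃ₗ[A] _)) := by
  classical
  intro σ τ h
  funext i
  ext1 k
  have : Nontrivial (A ⧸ i.1) := Submodule.Quotient.nontrivial_iff.mpr i.2.ne_top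
  obtain ⟨x, hx⟩ := exists_ne (0 : A ⧸ i.1)
  have h1 := LinearEquiv.congr_fun h (Pi.single i (Pi.single (σ i k) x))
  have h2 := congrFun (congrFun h1 i) k
  simp [LinearEquiv.funCongrLeft, LinearMap.funLeft, Pi.single_apply] at h2
  by_contra hne
  exact hx (h2 fun h => hne h.symm)

/-- The representation underlying an object of `FDRep`. -/
noncomputable abbrev tameRho {F G : Type} [Field F] [Group G] (X : FDRep F G) :
    Representation F G X.V := X.ρ

/-- A module isomorphism gives an isomorphism of representations. -/
noncomputable def tameIso {F G : Type} [Field F] [Group G] (X Y : FDRep F G)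
    (e : (tameRho X).asModule ≃ₗ[MonoidAlgebra F G] (tameRho Y).asModule) : X ≅ Y :=
  Action.mkIso (LinearEquiv.toFGModuleCatIso (V := X) (W := Y)
    ((tameRho X).asModuleEquiv.symm ≪≫ₗ e.restrictScalars F ≪≫ₗ (tameRho Y).asModuleEquiv)) (by
      intro g
      ext x
      change (tameRho Y).asModuleEquiv (e ((tameRho X).asModuleEquiv.symm (tameRho X g x))) =
        tameRho Y g ((tameRho Y).asModuleEquiv (e ((tameRho X).asModuleEquiv.symm x)))
      rw [Representation.asModuleEquiv_symm_map_rho, map_smul,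
        Representation.asModuleEquiv_map_smul, Representation.asAlgebraHom_of])

theorem tameIso_injective {F G : Type} [Field F] [Group G] (X Y : FDRep F G) :
    Function.Injective (tameIso X Y) := by
  intro e e' h
  ext x
  have h1 : (tameIso X Y e).hom.hom.hom.hom x = (tameIso X Y e').hom.hom.hom.hom x := by rw [h]
  exact h1

/-- For a finite group `G` and a finite field `F` whose characteristic does not divide
the order of `G`, the groupoid of finite-dimensional `F`-linear representations of `G`
is tame: the family of reciprocals of the orders of the automorphism groups, indexed by
isomorphism classes, is summable. -/
theorem fdRep_tame (F : Type) [Field F] [Fintype F] (G : Type) [Group G] [Finite G]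
    (hchar : ¬ (ringChar F ∣ Nat.card G)) :
    Summable (fun X : Skeleton (FDRep F G) => ((Nat.card (Aut X) : ℝ))⁻¹) := by
  classical
  have : NeZero (Nat.card G : F) := ⟨fun h => hchar ((ringChar.spec F _).mp h)⟩
  have : Module.Finite F (MonoidAlgebra F G) := inferInstance
  have : Finite (MonoidAlgebra F G) := Module.finite_of_finite F
  have : Finite {I : Ideal (MonoidAlgebra F G) // I.IsMaximal} := by
    have : Finite (Ideal (MonoidAlgebra F G)) := Finite.of_injective _ SetLike.coe_injective
    infer_instance
  have := Fintype.ofFinite {I : Ideal (MonoidAlgebra F G) // I.IsMaximal}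
  have key : ∀ X : FDRep F G, ∃ n : {I : Ideal (MonoidAlgebra F G) // I.IsMaximal} → ℕ,
      Nonempty ((tameRho X).asModule ≃ₗ[MonoidAlgebra F G]
        ((i : {I : Ideal (MonoidAlgebra F G) // I.IsMaximal}) →
          Fin (n i) → (MonoidAlgebra F G ⧸ i.1))) := by
    intro X
    have : Module.Finite (MonoidAlgebra F G) (tameRho X).asModule :=
      Module.Finite.of_restrictScalars_finite F _ _
    exact tame_decomp _ _
  choose n hn using key
  let ν : Skeleton (FDRep F G) → ({I : Ideal (MonoidAlgebra F G) // I.IsMaximal} → ℕ) :=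
    fun X => n ((fromSkeleton _).obj X)
  have hν : Function.Injective ν := by
    intro X Y h
    obtain ⟨e⟩ := hn ((fromSkeleton _).obj X)
    obtain ⟨e'⟩ := hn ((fromSkeleton _).obj Y)
    change n ((fromSkeleton _).obj X) = n ((fromSkeleton _).obj Y) at h
    rw [← h] at e'
    have i := tameIso _ _ (e ≪≫ₗ e'.symm)
    exact skeleton_skeletal _ ⟨(fromSkeleton _).preimageIso i⟩
  refine Summable.of_nonneg_of_le (fun X => by positivity) ?_
    ((tame_summable_aux _).comp_injective hν)
  intro X
  rcases finite_or_infinite (Aut X) with hfin | hinf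
  · have hcard : ∏ i, (ν X i).factorial ≤ Nat.card (Aut X) := by
      obtain ⟨e⟩ := hn ((fromSkeleton _).obj X)
      let P := (fromSkeleton (FDRep F G)).obj X
      let a : ((i : {I : Ideal (MonoidAlgebra F G) // I.IsMaximal}) → Equiv.Perm (Fin (ν X i))) →
          Aut X := fun σ => (fromSkeleton _).preimageIso (tameIso P P
            (e ≪≫ₗ (LinearEquiv.piCongrRight fun i =>
              LinearEquiv.funCongrLeft (MonoidAlgebra F G) (MonoidAlgebra F G ⧸ i.1) (σ i)) ≪≫ₗ
              e.symm))
      have ha : Function.Injective a := by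
        intro σ τ h
        have h1 := congrArg (fromSkeleton _).mapIso h
        have hmp : ∀ i : P ≅ P, (fromSkeleton (FDRep F G)).mapIso
            ((fromSkeleton (FDRep F G)).preimageIso (X := X) (Y := X) i) = i := by
          intro i
          ext1
          exact (fromSkeleton (FDRep F G)).map_preimage i.hom
        have h1 := (hmp _).symm.trans (h1.trans (hmp _))
        have h2 := tameIso_injective _ _ h1
        apply tame_perm_inj
        ext1 y
        have h3 := LinearEquiv.congr_fun h2 (e.symm y)
        simpa using h3
      have h4 := Nat.card_le_card_of_injective a ha
      simpa [Nat.card_pi, Nat.card_eq_fintype_card, Fintype.card_perm] using h4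
    have hpos : (0 : ℝ) < ∏ i, ((ν X i).factorial : ℝ) :=
      Finset.prod_pos fun i _ => by positivity
    simp only [Function.comp, Finset.prod_inv_distrib]
    exact inv_anti₀ hpos (by exact_mod_cast hcard)
  · rw [Nat.card_eq_zero_of_infinite]
    simp only [Nat.cast_zero, inv_zero]
    exact Finset.prod_nonneg fun i _ => by positivity
end

section
/- Let G be a finite group. The groupoid cardinality of the groupoid of finite G-sets and G-equivariant bijections equals exp(∑_{[H ≤ G]} 1/#C), where the sum is over conjugacy classes of subgroups H of G, and C is the centralizer in the symmetric group Sym(G⧸H) of the image of the permutation representation θ : G →* Sym(G⧸H) given by left multiplication on cosets. That is, ∑_{[X]} 1/#Aut_G(X) = Real.exp(∑_{[H ≤ G]} (Nat.card (Subgroup.centralizer (Set.range (MulAction.toPermHom G (G⧸H)))))⁻¹), where the left-hand sum is a tsum over isomorphism classes of finite G-sets of the reciprocal of the number of G-equivariant bijections of X with itself. -/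
open CategoryTheory
open scoped Pointwise
namespace GSets

/-- The model finite `G`-set with `m c` orbits of type `H c`. -/
abbrev T {G : Type} [Group G] {I : Type} (H : I → Subgroup G) (m : I → ℕ) : Type :=
  Σ c : I, Σ _ : Fin (m c), G ⧸ H c

/-- Equivariant bijections. -/
abbrev EqvIso (G X Y : Type*) [Group G] [MulAction G X] [MulAction G Y] :=
  {e : X ≃ Y // ∀ (g : G) x, e (g • x) = g • e x}

/-- The centralizer. -/
abbrev Cent {G : Type} [Group G] (H : Subgroup G) : Subgroup (Equiv.Perm (G ⧸ H)) :=
  Subgroup.centralizer (Set.range (MulAction.toPermHom G (G ⧸ H)))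

lemma mem_Cent {G : Type} [Group G] (H : Subgroup G) (ψ : Equiv.Perm (G ⧸ H)) :
    ψ ∈ Cent H ↔ ∀ (g : G) x, ψ (g • x) = g • ψ x := by
  rw [Subgroup.mem_centralizer_iff]
  constructor
  · intro h g x
    exact (DFunLike.congr_fun (h _ ⟨g, rfl⟩) x).symm
  · rintro h _ ⟨g, rfl⟩
    ext x
    exact (h g x).symm

set_option linter.unusedSectionVars false

section
variable {G : Type} [Group G] [Finite G] {I : Type} (H : I → Subgroup G)

lemma mk_smul_iff (K : Subgroup G) (x a : G) :
    x • (QuotientGroup.mk a : G ⧸ K) = QuotientGroup.mk a ↔ a⁻¹ * x * a ∈ K := by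
  rw [MulAction.Quotient.smul_mk, eq_comm, QuotientGroup.eq, smul_eq_mul, mul_assoc]

lemma key (hinj : ∀ c d (g : G), (∀ x, x ∈ H c ↔ g⁻¹ * x * g ∈ H d) → c = d)
    {m m' : I → ℕ} (f : T H m → T H m') (hf : Function.Injective f)
    (he : ∀ (g : G) x, f (g • x) = g • f x) (c : I) (i : Fin (m c)) :
    ∃ (j : Fin (m' c)) (ψ : Cent (H c)), ∀ x, f ⟨c, i, x⟩ = ⟨c, j, ψ.1 x⟩ := by
  obtain ⟨d, j, y, h⟩ : ∃ d j y, f ⟨c, i, (QuotientGroup.mk 1 : G ⧸ H c)⟩ = ⟨d, j, y⟩ :=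
    ⟨_, _, _, rfl⟩
  obtain ⟨a, rfl⟩ := QuotientGroup.mk_surjective y
  have hcd : c = d := by
    apply hinj c d a
    intro x
    rw [← mk_smul_iff]
    have h1 := mk_smul_iff (H c) x 1
    simp only [inv_one, one_mul, mul_one] at h1
    rw [← h1]
    have h2 := he x ⟨c, i, (QuotientGroup.mk 1 : G ⧸ H c)⟩
    rw [h] at h2
    constructor
    · intro h3
      have : x • (⟨c, i, (QuotientGroup.mk 1 : G ⧸ H c)⟩ : T H m) = ⟨c, i, QuotientGroup.mk 1⟩ := by
        simp only [Sigma.smul_mk, h3]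
      rw [this, h] at h2
      simpa [Sigma.smul_mk] using h2.symm
    · intro h3
      have : x • (⟨d, j, (QuotientGroup.mk a : G ⧸ H d)⟩ : T H m') = ⟨d, j, QuotientGroup.mk a⟩ := by
        simp only [Sigma.smul_mk, h3]
      rw [this, ← h] at h2
      simpa [Sigma.smul_mk] using hf h2
  subst hcd
  have hx : ∀ x : G ⧸ H c, f ⟨c, i, x⟩ = ⟨c, j, x.out • (QuotientGroup.mk a : G ⧸ H c)⟩ := by
    intro x
    have h2 := he x.out ⟨c, i, (QuotientGroup.mk 1 : G ⧸ H c)⟩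
    rw [h] at h2
    simpa [Sigma.smul_mk, MulAction.Quotient.smul_mk] using h2
  let ψ0 : G ⧸ H c → G ⧸ H c := fun x => x.out • (QuotientGroup.mk a : G ⧸ H c)
  have hψ : Function.Injective ψ0 := by
    intro x y hxy
    have : f ⟨c, i, x⟩ = f ⟨c, i, y⟩ := by
      rw [hx, hx]; simp only [ψ0] at hxy; rw [hxy]
    simpa using hf this
  refine ⟨j, ⟨Equiv.ofBijective ψ0 (Finite.injective_iff_bijective.1 hψ), ?_⟩, hx⟩
  rw [mem_Cent]
  intro g x
  have h2 := he g ⟨c, i, x⟩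
  rw [hx] at h2
  simp only [Sigma.smul_mk] at h2
  rw [hx] at h2
  have h3 : (g • x).out • (QuotientGroup.mk a : G ⧸ H c) =
      g • x.out • (QuotientGroup.mk a : G ⧸ H c) :=
    eq_of_heq (Sigma.mk.inj (eq_of_heq (Sigma.mk.inj h2).2)).2
  exact h3

lemma le_of_iso (hinj : ∀ c d (g : G), (∀ x, x ∈ H c ↔ g⁻¹ * x * g ∈ H d) → c = d)
    {m m' : I → ℕ} (e : EqvIso G (T H m) (T H m')) (c : I) : m c ≤ m' c := by
  have := key H hinj e.1 e.1.injective e.2 c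
  choose σ ψ h using this
  have hσ : Function.Injective σ := by
    intro i i' hi
    have h1 := h i ((ψ i).1.symm (QuotientGroup.mk 1))
    have h2 := h i' ((ψ i').1.symm (QuotientGroup.mk 1))
    rw [Equiv.apply_symm_apply] at h1 h2
    rw [← hi, ← h1] at h2
    have := e.1.injective h2
    simp at this
    exact this.1.symm
  simpa using Fintype.card_le_of_injective σ hσ

/-- The equivariant inverse. -/
def EqvIso.symm {G X Y : Type*} [Group G] [MulAction G X] [MulAction G Y] (e : EqvIso G X Y) :
    EqvIso G Y X :=
  ⟨e.1.symm, fun g x => by rw [Equiv.symm_apply_eq, e.2, Equiv.apply_symm_apply]⟩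

lemma eq_of_iso (hinj : ∀ c d (g : G), (∀ x, x ∈ H c ↔ g⁻¹ * x * g ∈ H d) → c = d)
    {m m' : I → ℕ} (e : EqvIso G (T H m) (T H m')) : m = m' :=
  funext fun c => le_antisymm (le_of_iso H hinj e c) (le_of_iso H hinj (EqvIso.symm e) c)

/-- wreath product elements act. -/
def wr (m : I → ℕ) (p : ∀ c, Equiv.Perm (Fin (m c)) × (Fin (m c) → Cent (H c))) :
    EqvIso G (T H m) (T H m) :=
  ⟨Equiv.sigmaCongrRight fun c => Equiv.sigmaCongr (p c).1 fun i => ((p c).2 i).1, by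
    rintro g ⟨c, i, x⟩
    have := (mem_Cent _ _).1 ((p c).2 i).2 g x
    change (⟨c, (p c).1 i, ((p c).2 i).1 (g • x)⟩ : T H m) = ⟨c, (p c).1 i, g • ((p c).2 i).1 x⟩
    rw [this]⟩

lemma wr_apply (m : I → ℕ) (p : ∀ c, Equiv.Perm (Fin (m c)) × (Fin (m c) → Cent (H c))) (c i x) :
    (wr H m p).1 ⟨c, i, x⟩ = ⟨c, (p c).1 i, ((p c).2 i).1 x⟩ := rfl

lemma wr_bij (hinj : ∀ c d (g : G), (∀ x, x ∈ H c ↔ g⁻¹ * x * g ∈ H d) → c = d) (m : I → ℕ) :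
    Function.Bijective (wr H m) := by
  constructor
  · intro p q hpq
    have h : ∀ c i x, (⟨c, (p c).1 i, ((p c).2 i).1 x⟩ : T H m) =
        ⟨c, (q c).1 i, ((q c).2 i).1 x⟩ := by
      intro c i x
      rw [← wr_apply, ← wr_apply, hpq]
    funext c
    refine Prod.ext (Equiv.ext fun i => ?_) (funext fun i => Subtype.ext (Equiv.ext fun x => ?_))
    · have := h c i (QuotientGroup.mk 1)
      simp at this
      exact this.1
    · have := h c i x
      simp at this
      exact this.2
  · intro e
    have := key H hinj e.1 e.1.injective e.2
    choose σ ψ h using this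
    have hσ : ∀ c, Function.Injective (σ c) := by
      intro c i i' hi
      have h1 := h c i ((ψ c i).1.symm (QuotientGroup.mk 1))
      have h2 := h c i' ((ψ c i').1.symm (QuotientGroup.mk 1))
      rw [Equiv.apply_symm_apply] at h1 h2
      rw [← hi, ← h1] at h2
      have := e.1.injective h2
      simp at this
      exact this.1.symm
    refine ⟨fun c => ⟨Equiv.ofBijective (σ c) (Finite.injective_iff_bijective.1 (hσ c)), ψ c⟩, ?_⟩
    apply Subtype.ext
    apply Equiv.ext
    rintro ⟨c, i, x⟩
    rw [wr_apply, h]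
    rfl

lemma card_aut [Fintype I]
    (hinj : ∀ c d (g : G), (∀ x, x ∈ H c ↔ g⁻¹ * x * g ∈ H d) → c = d) (m : I → ℕ) :
    Nat.card (EqvIso G (T H m) (T H m)) =
      ∏ c, ((m c).factorial * Nat.card (Cent (H c)) ^ (m c)) := by
  rw [← Nat.card_congr (Equiv.ofBijective _ (wr_bij H hinj m)), Nat.card_pi]
  refine Finset.prod_congr rfl fun c _ => ?_
  rw [Nat.card_prod, Nat.card_perm, Nat.card_fun]
  simp

lemma exists_iso [Finite I] (hinj : ∀ c d (g : G), (∀ x, x ∈ H c ↔ g⁻¹ * x * g ∈ H d) → c = d)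
    (hsurj : ∀ K : Subgroup G, ∃ c, ∃ g : G, ∀ x, x ∈ K ↔ g⁻¹ * x * g ∈ H c)
    (X : Type*) [Finite X] [MulAction G X] : ∃ m : I → ℕ, Nonempty (EqvIso G (T H m) X) := by
  classical
  let Ω := MulAction.orbitRel.Quotient G X
  -- type and base point of every orbit
  have hbase : ∀ ω : Ω, ∃ c, ∃ x : X, Quotient.mk'' x = ω ∧ MulAction.stabilizer G x = H c := by
    intro ω
    obtain ⟨x, rfl⟩ := Quotient.mk''_surjective ω
    obtain ⟨c, g, h⟩ := hsurj (MulAction.stabilizer G x)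
    refine ⟨c, g⁻¹ • x, ?_, ?_⟩
    · apply _root_.Quotient.sound'
      exact ⟨g⁻¹, rfl⟩
    · ext y
      have := h (g * y * g⁻¹)
      simp only [MulAction.mem_stabilizer_iff] at this ⊢
      rw [show g⁻¹ * (g * y * g⁻¹) * g = y by group] at this
      rw [← this, mul_smul, mul_smul, smul_eq_iff_eq_inv_smul (g := g)]
  choose t b hb hs using hbase
  have eqv : ∀ c, Nonempty (Fin (Nat.card {ω : Ω // t ω = c}) ≃ {ω : Ω // t ω = c}) := fun c =>
    ⟨(Finite.equivFin _).symm⟩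
  let e := fun c => (eqv c).some
  let m : I → ℕ := fun c => Nat.card {ω : Ω // t ω = c}
  refine ⟨m, ?_⟩
  have hs' : ∀ c (i : Fin (m c)), MulAction.stabilizer G (b (e c i).1) = H c := fun c i => by
    rw [hs, (e c i).2]
  let F : T H m → X := fun p => Quotient.liftOn' p.2.2 (fun g => g • b (e p.1 p.2.1).1) (by
    intro g g' h
    rw [QuotientGroup.leftRel_apply, ← hs' p.1 p.2.1, MulAction.mem_stabilizer_iff, mul_smul] at h
    rw [inv_smul_eq_iff] at h
    exact h.symm)
  have hF : ∀ c i (g : G), F ⟨c, i, (QuotientGroup.mk g : G ⧸ H c)⟩ = g • b (e c i).1 :=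
    fun c i g => rfl
  have hFe : ∀ (g : G) p, F (g • p) = g • F p := by
    rintro g ⟨c, i, x⟩
    obtain ⟨a, rfl⟩ := QuotientGroup.mk_surjective x
    simp only [Sigma.smul_mk, MulAction.Quotient.smul_mk, hF, smul_eq_mul, mul_smul]
  have hFω : ∀ c i x, (Quotient.mk'' (F ⟨c, i, x⟩) : Ω) = (e c i).1 := by
    intro c i x
    obtain ⟨a, rfl⟩ := QuotientGroup.mk_surjective x
    rw [hF, ← hb (e c i).1]
    apply _root_.Quotient.sound'
    exact ⟨a, by simp [hb]⟩
  have hbij : Function.Bijective F := by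
    constructor
    · rintro ⟨c, i, x⟩ ⟨c', i', x'⟩ h
      have h1 : (e c i).1 = (e c' i').1 := by rw [← hFω c i x, ← hFω c' i' x', h]
      have hc : c = c' := by rw [← (e c i).2, ← (e c' i').2, h1]
      subst hc
      have hi : i = i' := (e c).injective (Subtype.ext h1)
      subst hi
      obtain ⟨a, rfl⟩ := QuotientGroup.mk_surjective x
      obtain ⟨a', rfl⟩ := QuotientGroup.mk_surjective x'
      rw [hF, hF] at h
      have : (QuotientGroup.mk a : G ⧸ H c) = QuotientGroup.mk a' := by
        rw [QuotientGroup.eq, ← hs' c i, MulAction.mem_stabilizer_iff, mul_smul, ← h,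
          inv_smul_smul]
      rw [this]
    · intro x
      let ω : Ω := Quotient.mk'' x
      have h1 : (Quotient.mk'' (b ω) : Ω) = Quotient.mk'' x := hb ω
      obtain ⟨g, hg⟩ := _root_.Quotient.exact' h1.symm
      refine ⟨⟨t ω, (e (t ω)).symm ⟨ω, rfl⟩, (QuotientGroup.mk g : G ⧸ H (t ω))⟩, ?_⟩
      rw [hF, Equiv.apply_symm_apply]
      exact hg
  exact ⟨⟨Equiv.ofBijective F hbij, hFe⟩⟩
end

lemma hasSum_fib {I : Type} [Fintype I] [DecidableEq I] (n : ℕ) (F : (I → ℕ) → ℝ) :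
    HasSum (fun m : {m : I → ℕ // ∑ c, m c = n} => F m.1)
      (∑ m ∈ Finset.univ.piAntidiag n, F m) := by
  have h6 := (Finset.univ.piAntidiag n : Finset (I → ℕ)).hasSum F
  let e : {m : I → ℕ // ∑ c, m c = n} ≃ {m // m ∈ (Finset.univ.piAntidiag n : Finset (I → ℕ))} :=
    Equiv.subtypeEquivRight fun m => by simp
  exact e.hasSum_iff.2 h6

lemma tsum_pi_exp {I : Type} [Fintype I] (x : I → ℝ) (hx : ∀ c, 0 ≤ x c) :
    ∑' m : I → ℕ, ∏ c, (x c ^ m c / (m c).factorial) = Real.exp (∑ c, x c) := by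
  classical
  have hfib : ∀ n : ℕ, HasSum (fun m : {m : I → ℕ // ∑ c, m c = n} =>
      ∏ c, (x c ^ m.1 c / (m.1 c).factorial)) ((∑ c, x c) ^ n / n.factorial) := by
    intro n
    have h1 : (∑ c, x c) ^ n / n.factorial =
        ∑ m ∈ Finset.univ.piAntidiag n, ∏ c, (x c ^ m c / ((m c).factorial : ℝ)) := by
      rw [Finset.sum_pow_eq_sum_piAntidiag, Finset.sum_div]
      refine Finset.sum_congr rfl fun m hm => ?_
      have hm' : ∑ c, m c = n := (Finset.mem_piAntidiag.1 hm).1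
      have h2 := Nat.multinomial_spec Finset.univ m
      rw [hm'] at h2
      have h3 : (∏ c, ((m c).factorial : ℝ)) * Nat.multinomial Finset.univ m = n.factorial := by
        exact_mod_cast h2
      rw [Finset.prod_div_distrib, ← h3]
      have h4 : (∏ c, ((m c).factorial : ℝ)) ≠ 0 :=
        Finset.prod_ne_zero_iff.2 fun c _ => by positivity
      have h5 : (Nat.multinomial Finset.univ m : ℝ) ≠ 0 := by
        intro h; rw [h, mul_zero] at h3; exact (Nat.cast_ne_zero.2 n.factorial_ne_zero) h3.symm
      field_simp
    rw [h1]
    exact hasSum_fib n (fun m => ∏ c, (x c ^ m c / ((m c).factorial : ℝ)))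
  have hexp : HasSum (fun n : ℕ => (∑ c, x c) ^ n / n.factorial) (Real.exp (∑ c, x c)) := by
    rw [Real.exp_eq_exp_ℝ]
    exact NormedSpace.expSeries_div_hasSum_exp _
  have hs : HasSum (fun p : Σ n : ℕ, {m : I → ℕ // ∑ c, m c = n} =>
      ∏ c, (x c ^ p.2.1 c / (p.2.1 c).factorial)) (Real.exp (∑ c, x c)) := by
    have hsum : Summable (fun p : Σ n : ℕ, {m : I → ℕ // ∑ c, m c = n} =>
        ∏ c, (x c ^ p.2.1 c / (p.2.1 c).factorial)) := by
      rw [summable_sigma_of_nonneg]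
      · refine ⟨fun n => (hfib n).summable, ?_⟩
        simp_rw [fun n => (hfib n).tsum_eq]
        exact hexp.summable
      · intro p
        exact Finset.prod_nonneg fun c _ => div_nonneg (pow_nonneg (hx c) _) (by positivity)
    have := hsum.hasSum
    have h8 := this.sigma hfib
    rwa [h8.unique hexp] at this
  rw [← hs.tsum_eq]
  exact ((Equiv.sigmaFiberEquiv (fun m : I → ℕ => ∑ c, m c)).tsum_eq
    (fun m => ∏ c, (x c ^ m c / ((m c).factorial : ℝ)))).symm


universe u

section cat
variable {G : Type} [Group G]

/-- The underlying `MulAction`. -/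
abbrev actOf (A : Action FintypeCat.{u} G) : MulAction G A.V.obj where
  smul g x := (ConcreteCategory.hom (A.ρ g : A.V ⟶ A.V)) x
  one_smul x := by
    change (ConcreteCategory.hom (A.ρ 1 : A.V ⟶ A.V)) x = x
    rw [map_one]; rfl
  mul_smul g h x := by
    change (ConcreteCategory.hom (A.ρ (g * h) : A.V ⟶ A.V)) x =
      (ConcreteCategory.hom (A.ρ g : A.V ⟶ A.V)) ((ConcreteCategory.hom (A.ρ h : A.V ⟶ A.V)) x)
    rw [map_mul]; rfl

attribute [local instance] actOf

/-- Isomorphisms are equivariant bijections. -/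
def isoEquiv (A B : Action FintypeCat.{u} G) : (A ≅ B) ≃ EqvIso G A.V.obj B.V.obj where
  toFun i := ⟨FintypeCat.equivEquivIso.symm ((Action.forget _ _).mapIso i), fun g x =>
    ConcreteCategory.congr_hom (i.hom.comm g) x⟩
  invFun e := Action.mkIso (FintypeCat.equivEquivIso e.1) fun g => by
    ext x
    exact e.2 g x
  left_inv i := by
    ext x
    rfl
  right_inv e := by
    apply Subtype.ext
    ext x
    rfl

/-- model -/
abbrev model {I : Type} [Finite I] [Finite G] (H : I → Subgroup G) (m : I → ℕ) :
    Action FintypeCat.{u} G :=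
  Action.FintypeCat.ofMulAction G (FintypeCat.of (ULift.{u} (T H m)))

/-- Isomorphisms from a model. -/
def modelIso {I : Type} [Finite I] [Finite G] (H : I → Subgroup G) (m : I → ℕ)
    (A : Action FintypeCat.{u} G) :
    (model H m ≅ A) ≃ EqvIso G (T H m) A.V.obj :=
  (isoEquiv _ _).trans
    { toFun := fun e => ⟨Equiv.ulift.symm.trans e.1, fun g x => e.2 g ⟨x⟩⟩
      invFun := fun e => ⟨Equiv.ulift.trans e.1, fun g x => e.2 g x.down⟩
      left_inv := fun e => rfl
      right_inv := fun e => rfl }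

/-- Isomorphisms between models. -/
def modelIso₂ {I : Type} [Finite I] [Finite G] (H : I → Subgroup G) (m m' : I → ℕ) :
    ((model H m : Action FintypeCat.{u} G) ≅ model H m') ≃ EqvIso G (T H m) (T H m') :=
  (modelIso H m _).trans
    { toFun := fun e => ⟨e.1.trans Equiv.ulift, fun g x => congrArg ULift.down (e.2 g x)⟩
      invFun := fun e => ⟨e.1.trans Equiv.ulift.symm, fun g x => congrArg ULift.up (e.2 g x)⟩
      left_inv := fun e => rfl
      right_inv := fun e => rfl }

lemma card_aut_skel {C : Type*} [Category C] (X : C) :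
    Nat.card (Aut (toSkeleton X)) = Nat.card (X ≅ X) := by
  refine Nat.card_congr (((Functor.FullyFaithful.ofFullyFaithful (fromSkeleton C)).isoEquiv
    (X := toSkeleton X) (Y := toSkeleton X)).trans ?_)
  exact (Iso.isoCongr (fromSkeletonToSkeletonIso X) (fromSkeletonToSkeletonIso X))

lemma main [Finite G] {I : Type} [Fintype I] (H : I → Subgroup G)
    (hinj : ∀ c d (g : G), (∀ x, x ∈ H c ↔ g⁻¹ * x * g ∈ H d) → c = d)
    (hsurj : ∀ K : Subgroup G, ∃ c, ∃ g : G, ∀ x, x ∈ K ↔ g⁻¹ * x * g ∈ H c) :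
    ∑' X : Skeleton (Action FintypeCat.{u} G), ((Nat.card (Aut X) : ℝ))⁻¹ =
      Real.exp (∑ c, ((Nat.card (Cent (H c)) : ℝ))⁻¹) := by
  let Φ : (I → ℕ) → Skeleton (Action FintypeCat.{u} G) := fun m => toSkeleton (model H m)
  have hΦ : Function.Bijective Φ := by
    constructor
    · intro m m' h
      obtain ⟨i⟩ : IsIsomorphic (model H m : Action FintypeCat.{u} G) (model H m') :=
        _root_.Quotient.exact h
      exact eq_of_iso H hinj (modelIso₂ H m m' i)
    · intro X
      obtain ⟨A, rfl⟩ := _root_.Quotient.exists_rep X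
      obtain ⟨m, ⟨e⟩⟩ := exists_iso H hinj hsurj A.V.obj
      exact ⟨m, _root_.Quotient.sound ⟨(modelIso H m A).symm e⟩⟩
  rw [← (Equiv.ofBijective Φ hΦ).tsum_eq, ← tsum_pi_exp _ (fun c => by positivity)]
  refine tsum_congr fun m => ?_
  change ((Nat.card (Aut (toSkeleton (model H m : Action FintypeCat.{u} G))) : ℝ))⁻¹ = _
  rw [card_aut_skel, Nat.card_congr (modelIso₂ H m m), card_aut H hinj]
  push_cast
  rw [← Finset.prod_inv_distrib]
  refine Finset.prod_congr rfl fun c _ => ?_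
  rw [mul_inv, inv_pow, mul_comm, div_eq_mul_inv]

end cat
end GSets

theorem groupoidCard_finite_G_sets (G : Type) [Group G] [Finite G] :
    ∑' X : Skeleton (Action FintypeCat (MonCat.of G)), ((Nat.card (Aut X) : ℝ))⁻¹ =
      Real.exp (∑ᶠ c : Quotient (MulAction.orbitRel (ConjAct G) (Subgroup G)),
        ((Nat.card (Subgroup.centralizer
          (Set.range (MulAction.toPermHom G (G ⧸ c.out)))) : ℝ))⁻¹) := by
  classical
  have := Fintype.ofFinite (Quotient (MulAction.orbitRel (ConjAct G) (Subgroup G)))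
  rw [finsum_eq_sum_of_fintype]
  have hmem : ∀ (g : G) (K : Subgroup G) (x : G),
      x ∈ ConjAct.toConjAct g • K ↔ g⁻¹ * x * g ∈ K := by
    intro g K x
    rw [Subgroup.mem_pointwise_smul_iff_inv_smul_mem, ← ConjAct.toConjAct_inv,
      ConjAct.toConjAct_smul, inv_inv]
  refine GSets.main (fun c : Quotient (MulAction.orbitRel (ConjAct G) (Subgroup G)) => c.out) ?_ ?_
  · intro c d g h
    rw [← Quotient.out_eq c, ← Quotient.out_eq d]
    refine _root_.Quotient.sound ⟨ConjAct.toConjAct g, ?_⟩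
    ext x
    exact (hmem g _ x).trans (h x).symm
  · intro K
    obtain ⟨g, hg⟩ := _root_.Quotient.exact
      (Quotient.out_eq (Quotient.mk (MulAction.orbitRel (ConjAct G) (Subgroup G)) K)).symm
    refine ⟨Quotient.mk (MulAction.orbitRel (ConjAct G) (Subgroup G)) K, ConjAct.ofConjAct g, ?_⟩
    intro x
    rw [← hmem]
    exact (SetLike.ext_iff.1 hg x).symm
end
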